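/- Let k ≥ 2 be an integer and ζ ∈ ℂ a primitive k-th root of unity. Let σ be the ℂ-algebra automorphism of ℂ[u,v,t] with σ(u) = ζ·u, σ(v) = ζ⁻¹·v, σ(t) = t, generating an action of ℤ/kℤ. This action preserves the ideal (u^k·t) and hence descends to the quotient ring ℂ[u,v,t]/(u^k·t). The subring of ℤ/kℤ-invariants of ℂ[u,v,t]/(u^k·t) is isomorphic as a ℂ-algebra to ℂ[x,y,z,t]/(x·y − z^k, x·t), via x ↦ u^k, y ↦ v^k, z ↦ u·v, t ↦ t. -/

import Mathlib

open MvPolynomial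

/-- The ℂ-algebra endomorphism σ of ℂ[u,v,t] with σ(u) = ζ·u, σ(v) = ζ⁻¹·v, σ(t) = t, the
generator of the cyclic group action denoted 1/k(1,−1,0). -/
noncomputable def sigma (ζ : ℂ) : MvPolynomial (Fin 3) ℂ →ₐ[ℂ] MvPolynomial (Fin 3) ℂ :=
  aeval ![C ζ * X 0, C ζ⁻¹ * X 1, X 2]

/-- The ideal `(u^k·t)` of `ℂ[u,v,t]`. -/
noncomputable def J (k : ℕ) : Ideal (MvPolynomial (Fin 3) ℂ) :=
  Ideal.span {(X 0 ^ k * X 2 : MvPolynomial (Fin 3) ℂ)}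

/-- The ideal `(x·y − z^k, x·t)` of `ℂ[x,y,z,t]`. -/
noncomputable def I (k : ℕ) : Ideal (MvPolynomial (Fin 4) ℂ) :=
  Ideal.span
    {(X 0 * X 1 - X 2 ^ k : MvPolynomial (Fin 4) ℂ), (X 0 * X 3 : MvPolynomial (Fin 4) ℂ)}

/-!
A monomial ideal is stable under any diagonal action, and its quotient has the residues of the
monomials outside it as a basis of eigenvectors. Hence, over a domain `R` with a primitive `k`-th
root of unity, the invariants of `R[u,v,t]/(u^k·t)` are spanned by the monomials `u^a v^b t^c` with
`a ≡ b` modulo `k`, each of which is a monomial in `u^k, v^k, u·v, t`; this gives surjectivity. For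
injectivity, sending these monomials to their normal forms `x^d z^l t^c` or `y^d z^l t^c`, and all
other monomials to `0`, defines a linear retraction of the substitution map, and this retraction
kills `(u^k·t)`: on an invariant monomial `m` it sends `u^k·t·m` to a multiple of `x·t`.
-/

section DiagonalAction

variable {ι R : Type*} [CommSemiring R]

/-- The diagonal action on a polynomial ring: the endomorphism scaling the variable `X i` by
`χ i`. The group acting is left implicit, only the endomorphism of one group element being
encoded. -/
noncomputable def diagonalAction (χ : ι → R) : MvPolynomial ι R →ₐ[R] MvPolynomial ι R :=
  aeval fun i => C (χ i) * X i

lemma diagonalAction_X (χ : ι → R) (i : ι) : diagonalAction χ (X i) = C (χ i) * X i :=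
  aeval_X _ i

lemma diagonalAction_monomial (χ : ι → R) (s : ι →₀ ℕ) (c : R) :
    diagonalAction χ (monomial s c) = monomial s ((s.prod fun i n => χ i ^ n) * c) := by
  simp only [diagonalAction, aeval_monomial, algebraMap_eq, mul_pow, Finsupp.prod_mul]
  rw [monomial_eq, mul_comm _ c, C_mul, mul_assoc]
  simp only [Finsupp.prod, map_prod, map_pow]

lemma coeff_diagonalAction (χ : ι → R) (s : ι →₀ ℕ) (p : MvPolynomial ι R) :
    coeff s (diagonalAction χ p) = (s.prod fun i n => χ i ^ n) * coeff s p := by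
  classical
  induction p using MvPolynomial.induction_on' with
  | monomial u a =>
    simp only [diagonalAction_monomial, coeff_monomial]
    split_ifs with h
    · rw [h]
    · rw [mul_zero]
  | add p q hp hq => rw [map_add, coeff_add, coeff_add, hp, hq, mul_add]

lemma diagonalAction_mem_span_monomial (χ : ι → R) {S : Set (ι →₀ ℕ)} {p : MvPolynomial ι R}
    (hp : p ∈ Ideal.span ((fun s => monomial s (1 : R)) '' S)) :
    diagonalAction χ p ∈ Ideal.span ((fun s => monomial s (1 : R)) '' S) := by
  rw [mem_ideal_span_monomial_image] at hp ⊢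
  intro s hs
  rw [mem_support_iff, coeff_diagonalAction] at hs
  exact hp s (mem_support_iff.2 (right_ne_zero_of_mul hs))

lemma prod_eq_one_or_monomial_mem_of_diagonalAction_sub_mem
    {ι R : Type*} [CommRing R] [NoZeroDivisors R] {χ : ι → R} {S : Set (ι →₀ ℕ)}
    {p : MvPolynomial ι R}
    (hp : diagonalAction χ p - p ∈ Ideal.span ((fun s => monomial s (1 : R)) '' S))
    {s : ι →₀ ℕ} (hs : s ∈ p.support) :
    (s.prod fun i n => χ i ^ n) = 1 ∨
      monomial s (1 : R) ∈ Ideal.span ((fun s => monomial s (1 : R)) '' S) := by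
  refine or_iff_not_imp_left.2 fun hχ => ?_
  have hcoeff : coeff s (diagonalAction χ p - p) =
      ((s.prod fun i n => χ i ^ n) - 1) * coeff s p := by
    rw [coeff_sub, coeff_diagonalAction, sub_one_mul]
  have hs' : s ∈ (diagonalAction χ p - p).support := by
    rw [mem_support_iff, hcoeff]
    exact mul_ne_zero (sub_ne_zero.2 hχ) (mem_support_iff.1 hs)
  obtain ⟨r, hrS, hrs⟩ := mem_ideal_span_monomial_image.1 hp s hs'
  refine Ideal.mem_of_dvd _ ?_ (Ideal.subset_span ⟨r, hrS, rfl⟩)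
  exact monomial_dvd_monomial.2 ⟨Or.inr hrs, dvd_rfl⟩

end DiagonalAction

lemma monomial_fin_three {R : Type*} [CommSemiring R] (s : Fin 3 →₀ ℕ) :
    (monomial s 1 : MvPolynomial (Fin 3) R) = X 0 ^ s 0 * X 1 ^ s 1 * X 2 ^ s 2 := by
  rw [monomial_eq, Finsupp.prod_fintype _ _ fun _ => pow_zero _, Fin.prod_univ_three, C_1, one_mul]

lemma monomial_fin_four {R : Type*} [CommSemiring R] (s : Fin 4 →₀ ℕ) :
    (monomial s 1 : MvPolynomial (Fin 4) R) =
      X 0 ^ s 0 * X 1 ^ s 1 * X 2 ^ s 2 * X 3 ^ s 3 := by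
  rw [monomial_eq, Finsupp.prod_fintype _ _ fun _ => pow_zero _, Fin.prod_univ_four, C_1, one_mul]

section CyclicQuotient

open Ideal.Quotient (mk)

variable {R : Type*} [CommRing R]

lemma prod_pow_eq_one_iff_modEq {k : ℕ} {ζ : Rˣ} (hζ : IsPrimitiveRoot ζ k) (s : Fin 3 →₀ ℕ) :
    (s.prod fun i n => (![(ζ : R), ↑ζ⁻¹, 1] i) ^ n) = 1 ↔ s 0 ≡ s 1 [MOD k] := by
  have hprod : (s.prod fun i n => (![(ζ : R), ↑ζ⁻¹, 1] i) ^ n) =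
      (ζ ^ ((s 0 : ℤ) - s 1) : Rˣ) := by
    rw [Finsupp.prod_fintype _ _ fun _ => pow_zero _, Fin.prod_univ_three]
    simp [zpow_sub]
  rw [hprod, Units.val_eq_one, hζ.zpow_eq_one_iff_dvd, Nat.ModEq.comm, Nat.modEq_iff_dvd]

variable (R) in
/-- The ideal `(u^k·t)` of `R[u,v,t]`, cutting out the cover of the local model of the central
fibre; over `ℂ` it is `J k`. -/
noncomputable def coverIdeal (k : ℕ) : Ideal (MvPolynomial (Fin 3) R) :=
  Ideal.span {X 0 ^ k * X 2}

variable (R) in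
/-- The ideal `(x·y − z^k, x·t)` of `R[x,y,z,t]`, cutting out the local model of the central
fibre; over `ℂ` it is `I k`. -/
noncomputable def centralFibreIdeal (k : ℕ) : Ideal (MvPolynomial (Fin 4) R) :=
  Ideal.span {X 0 * X 1 - X 2 ^ k, X 0 * X 3}

variable (R) in
/-- The substitution `x ↦ u^k, y ↦ v^k, z ↦ u·v, t ↦ t` of the generating invariants of the
action of weights `(1, −1, 0)`. -/
noncomputable def invariantSubst (k : ℕ) : MvPolynomial (Fin 4) R →ₐ[R] MvPolynomial (Fin 3) R :=
  aeval ![X 0 ^ k, X 1 ^ k, X 0 * X 1, X 2]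

lemma coverIdeal_eq_span_monomial (k : ℕ) :
    coverIdeal R k = Ideal.span ((fun s => monomial s (1 : R)) ''
      {Finsupp.equivFunOnFinite.symm ![k, 0, 1]}) := by
  simp [coverIdeal, Set.image_singleton, monomial_fin_three]

lemma invariantSubst_monomial (k i j l m : ℕ) :
    invariantSubst R k (X 0 ^ i * X 1 ^ j * X 2 ^ l * X 3 ^ m) =
      X 0 ^ (l + k * i) * X 1 ^ (l + k * j) * X 2 ^ m := by
  simp only [invariantSubst, map_mul, map_pow, aeval_X, Matrix.cons_val]
  ring

lemma diagonalAction_invariantSubst {k : ℕ} {ζ : Rˣ} (hζ : ζ ^ k = 1) (p : MvPolynomial (Fin 4) R) :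
    diagonalAction ![(ζ : R), ↑ζ⁻¹, 1] (invariantSubst R k p) = invariantSubst R k p := by
  have hζ' : (ζ : R) ^ k = 1 := by rw [← Units.val_pow_eq_pow_val, hζ, Units.val_one]
  have hζinv : (↑ζ⁻¹ : R) ^ k = 1 := by
    rw [← Units.val_pow_eq_pow_val, inv_pow, hζ, inv_one, Units.val_one]
  suffices (diagonalAction ![(ζ : R), ↑ζ⁻¹, 1]).comp (invariantSubst R k) = invariantSubst R k from
    DFunLike.congr_fun this p
  refine algHom_ext fun i => ?_
  rw [AlgHom.comp_apply, invariantSubst, aeval_X]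
  fin_cases i
  · simp [diagonalAction_X, mul_pow, ← C_pow, hζ']
  · simp [diagonalAction_X, mul_pow, ← C_pow, hζinv]
  · have huv : (C (ζ : R) * X 0 * (C (↑ζ⁻¹ : R) * X 1) : MvPolynomial (Fin 3) R) = X 0 * X 1 := by
      rw [mul_mul_mul_comm, ← C_mul, Units.mul_inv, C_1, one_mul]
    simpa [diagonalAction_X] using huv
  · simp [diagonalAction_X]

lemma exists_invariantSubst_eq_of_modEq {k a b : ℕ} (h : a ≡ b [MOD k]) (c : ℕ) :
    ∃ q, invariantSubst R k q = X 0 ^ a * X 1 ^ b * X 2 ^ c := by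
  rcases le_total a b with hab | hab
  · obtain ⟨d, hd⟩ := (Nat.modEq_iff_dvd' hab).1 h
    obtain rfl : b = a + k * d := by lia
    exact ⟨X 0 ^ 0 * X 1 ^ d * X 2 ^ a * X 3 ^ c, invariantSubst_monomial ..⟩
  · obtain ⟨d, hd⟩ := (Nat.modEq_iff_dvd' hab).1 h.symm
    obtain rfl : a = b + k * d := by lia
    exact ⟨X 0 ^ d * X 1 ^ 0 * X 2 ^ b * X 3 ^ c, invariantSubst_monomial ..⟩

variable (R) in
/-- The linear retraction of `invariantSubst R k` modulo `centralFibreIdeal R k`: it projects onto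
the span of the invariant monomials and writes each of them in normal form. At most one of the
exponents of `x` and `y` is nonzero, by truncated subtraction. -/
noncomputable def invariantRetraction (k : ℕ) :
    MvPolynomial (Fin 3) R →ₗ[R] MvPolynomial (Fin 4) R ⧸ centralFibreIdeal R k :=
  (basisMonomials (Fin 3) R).constr R fun s =>
    if s 0 ≡ s 1 [MOD k] then
      mk (centralFibreIdeal R k) (X 0 ^ ((s 0 - s 1) / k) * X 1 ^ ((s 1 - s 0) / k) *
        X 2 ^ min (s 0) (s 1) * X 3 ^ s 2)
    else 0

lemma invariantRetraction_monomial (k a b c : ℕ) :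
    invariantRetraction R k (X 0 ^ a * X 1 ^ b * X 2 ^ c) =
      if a ≡ b [MOD k] then
        mk (centralFibreIdeal R k)
          (X 0 ^ ((a - b) / k) * X 1 ^ ((b - a) / k) * X 2 ^ min a b * X 3 ^ c)
      else 0 := by
  have hmon := monomial_fin_three (R := R) (Finsupp.equivFunOnFinite.symm ![a, b, c])
  simp only [Finsupp.equivFunOnFinite_symm_apply_apply, Matrix.cons_val] at hmon
  rw [← hmon]
  refine ((basisMonomials (Fin 3) R).constr_basis R _ _).trans ?_
  simp only [Finsupp.equivFunOnFinite_symm_apply_apply, Matrix.cons_val]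

lemma mk_X_two_pow (k : ℕ) :
    mk (centralFibreIdeal R k) (X 2) ^ k =
      mk (centralFibreIdeal R k) (X 0) * mk (centralFibreIdeal R k) (X 1) := by
  rw [← map_pow, ← map_mul, eq_comm, Ideal.Quotient.eq]
  exact Ideal.subset_span (Set.mem_insert _ _)

lemma invariantRetraction_invariantSubst {k : ℕ} (hk : k ≠ 0) (p : MvPolynomial (Fin 4) R) :
    invariantRetraction R k (invariantSubst R k p) = mk (centralFibreIdeal R k) p := by
  suffices invariantRetraction R k ∘ₗ (invariantSubst R k).toLinearMap =
      (Ideal.Quotient.mkₐ R (centralFibreIdeal R k)).toLinearMap from DFunLike.congr_fun this p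
  refine (basisMonomials (Fin 4) R).ext fun s => ?_
  simp only [coe_basisMonomials, LinearMap.comp_apply, AlgHom.toLinearMap_apply,
    Ideal.Quotient.mkₐ_eq_mk, monomial_fin_four]
  generalize s 0 = i, s 1 = j, s 2 = l, s 3 = m
  have hmod : l + k * i ≡ l + k * j [MOD k] := by simp [Nat.ModEq]
  have hdiv (a b : ℕ) : (l + k * a - (l + k * b)) / k = a - b := by
    rw [Nat.add_sub_add_left, ← Nat.mul_sub, Nat.mul_div_cancel_left _ (Nat.pos_of_ne_zero hk)]
  have hmin : min (l + k * i) (l + k * j) = l + k * min i j := by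
    rw [min_add_add_left, Nat.mul_min_mul_left]
  rw [invariantSubst_monomial, invariantRetraction_monomial, if_pos hmod, hdiv, hdiv, hmin]
  simp only [map_mul, map_pow, pow_add, pow_mul, mk_X_two_pow, mul_pow]
  have hpow (x : MvPolynomial (Fin 4) R ⧸ centralFibreIdeal R k) (a b : ℕ) :
      x ^ a = x ^ (a - b) * x ^ min a b := by rw [← pow_add, tsub_add_min]
  rw [hpow (mk _ (X 0)) i j, hpow (mk _ (X 1)) j i, min_comm j i]
  ring

lemma invariantRetraction_eq_zero_of_mem {k : ℕ} (hk : k ≠ 0) {p : MvPolynomial (Fin 3) R}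
    (hp : p ∈ coverIdeal R k) : invariantRetraction R k p = 0 := by
  obtain ⟨q, rfl⟩ := Ideal.mem_span_singleton.1 hp
  suffices invariantRetraction R k ∘ₗ LinearMap.mulLeft R (X 0 ^ k * X 2) = 0 from
    DFunLike.congr_fun this q
  refine (basisMonomials (Fin 3) R).ext fun s => ?_
  simp only [coe_basisMonomials, LinearMap.comp_apply, LinearMap.mulLeft_apply,
    LinearMap.zero_apply, monomial_fin_three]
  by_cases h : s 0 ≡ s 1 [MOD k]
  · obtain ⟨m, hm⟩ := exists_invariantSubst_eq_of_modEq (R := R) h (s 2)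
    have hxt : invariantSubst R k (X 0 * X 3) = X 0 ^ k * X 2 := by simp [invariantSubst]
    rw [← hm, ← hxt, ← map_mul, invariantRetraction_invariantSubst hk,
      Ideal.Quotient.eq_zero_iff_mem]
    exact Ideal.mul_mem_right _ _ (Ideal.subset_span (Set.mem_insert_of_mem _ rfl))
  · have hmon : (X 0 ^ k * X 2 * (X 0 ^ s 0 * X 1 ^ s 1 * X 2 ^ s 2) : MvPolynomial (Fin 3) R) =
        X 0 ^ (k + s 0) * X 1 ^ s 1 * X 2 ^ (s 2 + 1) := by ring
    rw [hmon, invariantRetraction_monomial, if_neg (by simpa [Nat.ModEq] using h)]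

lemma comap_invariantSubst_coverIdeal {k : ℕ} (hk : k ≠ 0) :
    (coverIdeal R k).comap (invariantSubst R k) = centralFibreIdeal R k := by
  apply le_antisymm
  · intro p hp
    rw [← Ideal.Quotient.eq_zero_iff_mem, ← invariantRetraction_invariantSubst hk]
    exact invariantRetraction_eq_zero_of_mem hk hp
  · rw [centralFibreIdeal, Ideal.span_le]
    rintro _ (rfl | rfl)
    · simp [invariantSubst, mul_pow]
    · exact Ideal.subset_span (by simp [invariantSubst])

lemma exists_invariantSubst_sub_mem_of_diagonalAction_sub_mem [NoZeroDivisors R] {k : ℕ} {ζ : Rˣ}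
    (hζ : IsPrimitiveRoot ζ k) {p : MvPolynomial (Fin 3) R}
    (hp : diagonalAction ![(ζ : R), ↑ζ⁻¹, 1] p - p ∈ coverIdeal R k) :
    ∃ q, invariantSubst R k q - p ∈ coverIdeal R k := by
  let π := Ideal.Quotient.mkₐ R (coverIdeal R k)
  suffices π p ∈ (π.comp (invariantSubst R k)).range by
    obtain ⟨q, hq⟩ := this
    exact ⟨q, Ideal.Quotient.eq.1 hq⟩
  rw [p.as_sum, map_sum]
  refine Subalgebra.sum_mem _ fun s hs => ?_
  rw [← mul_one (coeff s p), ← smul_eq_mul, ← smul_monomial, map_smul]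
  refine Subalgebra.smul_mem _ ?_ _
  rw [coverIdeal_eq_span_monomial] at hp
  rcases prod_eq_one_or_monomial_mem_of_diagonalAction_sub_mem hp hs with hχ | hmem
  · obtain ⟨q, hq⟩ := exists_invariantSubst_eq_of_modEq (R := R)
      ((prod_pow_eq_one_iff_modEq hζ s).1 hχ) (s 2)
    exact ⟨q, congrArg π (hq.trans (monomial_fin_three s).symm)⟩
  · rw [← coverIdeal_eq_span_monomial] at hmem
    rw [show π (monomial s 1) = 0 from Ideal.Quotient.eq_zero_iff_mem.2 hmem]
    exact zero_mem _

lemma range_quotientMapₐ_invariantSubst [NoZeroDivisors R] {k : ℕ} {ζ : Rˣ}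
    (hζ : IsPrimitiveRoot ζ k)
    (hI : centralFibreIdeal R k ≤ (coverIdeal R k).comap (invariantSubst R k))
    (hJ : coverIdeal R k ≤ (coverIdeal R k).comap (diagonalAction ![(ζ : R), ↑ζ⁻¹, 1])) :
    (Ideal.quotientMapₐ (coverIdeal R k) (invariantSubst R k) hI).range =
      AlgHom.equalizer (Ideal.quotientMapₐ (coverIdeal R k) _ hJ) (AlgHom.id R _) := by
  ext x
  constructor
  · rintro ⟨y, rfl⟩
    obtain ⟨q, rfl⟩ := Ideal.Quotient.mk_surjective y
    exact congrArg (mk _) (diagonalAction_invariantSubst hζ.pow_eq_one q)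
  · intro hx
    obtain ⟨p, rfl⟩ := Ideal.Quotient.mk_surjective x
    obtain ⟨q, hq⟩ :=
      exists_invariantSubst_sub_mem_of_diagonalAction_sub_mem hζ (Ideal.Quotient.eq.1 hx)
    exact ⟨mk _ q, Ideal.Quotient.eq.2 hq⟩

end CyclicQuotient

lemma sigma_eq_diagonalAction (ζ : ℂˣ) : sigma ζ = diagonalAction ![(ζ : ℂ), ↑ζ⁻¹, 1] :=
  algHom_ext fun i => by fin_cases i <;> simp [sigma, diagonalAction]

theorem stmt2_general {R : Type*} [CommRing R] [NoZeroDivisors R] {k : ℕ} (hk : k ≠ 0) {ζ : Rˣ}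
    (hζ : IsPrimitiveRoot ζ k) :
    (∀ p ∈ coverIdeal R k, diagonalAction ![(ζ : R), ↑ζ⁻¹, 1] p ∈ coverIdeal R k) ∧
    ∀ h : coverIdeal R k ≤ (coverIdeal R k).comap (diagonalAction ![(ζ : R), ↑ζ⁻¹, 1]),
      ∃ e : (MvPolynomial (Fin 4) R ⧸ centralFibreIdeal R k) ≃ₐ[R]
            AlgHom.equalizer
              (Ideal.quotientMapₐ (coverIdeal R k) (diagonalAction ![(ζ : R), ↑ζ⁻¹, 1]) h)
              (AlgHom.id R (MvPolynomial (Fin 3) R ⧸ coverIdeal R k)),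
        ∀ p : MvPolynomial (Fin 4) R,
          (e (Ideal.Quotient.mk (centralFibreIdeal R k) p) :
              MvPolynomial (Fin 3) R ⧸ coverIdeal R k) =
            Ideal.Quotient.mk (coverIdeal R k) (invariantSubst R k p) := by
  refine ⟨fun p hp => ?_, fun hJ => ?_⟩
  · rw [coverIdeal_eq_span_monomial] at hp ⊢
    exact diagonalAction_mem_span_monomial _ hp
  · have hcomap := comap_invariantSubst_coverIdeal (R := R) hk
    let f := Ideal.quotientMapₐ (coverIdeal R k) (invariantSubst R k) hcomap.ge
    have hf : Function.Injective f := Ideal.quotientMap_injective' (H := hcomap.ge) hcomap.le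
    exact ⟨(AlgEquiv.ofInjective f hf).trans
      (Subalgebra.equivOfEq _ _ (range_quotientMapₐ_invariantSubst hζ hcomap.ge hJ)),
      fun p => rfl⟩

/-- For `ζ` a primitive `k`-th root of unity, the action of σ on `ℂ[u,v,t]` preserves the ideal
`(u^k·t)` and hence descends to `ℂ[u,v,t]/(u^k·t)`; the subring of invariants of this quotient
is isomorphic as a ℂ-algebra to `ℂ[x,y,z,t]/(x·y − z^k, x·t)` via
`x ↦ u^k, y ↦ v^k, z ↦ u·v, t ↦ t`. -/
theorem stmt2 (k : ℕ) (hk : 2 ≤ k) (ζ : ℂ) (hζ : IsPrimitiveRoot ζ k) :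
    (∀ p ∈ J k, sigma ζ p ∈ J k) ∧
    ∀ h : J k ≤ (J k).comap (sigma ζ),
      ∃ e : (MvPolynomial (Fin 4) ℂ ⧸ I k) ≃ₐ[ℂ]
            AlgHom.equalizer (Ideal.quotientMapₐ (J k) (sigma ζ) h)
              (AlgHom.id ℂ (MvPolynomial (Fin 3) ℂ ⧸ J k)),
        ∀ p : MvPolynomial (Fin 4) ℂ,
          (e (Ideal.Quotient.mk (I k) p) : MvPolynomial (Fin 3) ℂ ⧸ J k) =
            Ideal.Quotient.mk (J k) (aeval ![X 0 ^ k, X 1 ^ k, X 0 * X 1, X 2] p) := by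
  obtain ⟨ζ, rfl⟩ := hζ.isUnit (by lia)
  rw [sigma_eq_diagonalAction]
  exact stmt2_general (by lia) (IsPrimitiveRoot.coe_units_iff.1 hζ)
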